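/- Let ℓ be a prime, k an algebraic closure of the field with ℓ elements, n a natural number, and G a finite group possessing a central subgroup Z of order 2 such that G/Z is isomorphic to the alternating group A_n (i.e. G is a double cover of A_n). Then every block b of kG satisfies mf(kGb) = 1; that is, kGb is Morita equivalent (as a k-algebra) to its first Frobenius twist. -/

import Mathlib

open CategoryTheory

/-- A central idempotent of a ring. -/
def IsCentralIdem {R : Type*} [Ring R] (b : R) : Prop :=
  (∀ x, b * x = x * b) ∧ b * b = b

/-- A block of a ring: a primitive idempotent of the center, i.e. a nonzero central
idempotent that is not a sum of two nonzero orthogonal central idempotents. -/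
def IsBlock {R : Type*} [Ring R] (b : R) : Prop :=
  IsCentralIdem b ∧ b ≠ 0 ∧
    ∀ c d : R, IsCentralIdem c → IsCentralIdem d → c * d = 0 → b = c + d →
      c = 0 ∨ d = 0

/-- The corner of an idempotent `b`, as a non-unital subring of `R`. -/
def cornerSubring {R : Type*} [Ring R] (b : R) : NonUnitalSubring R where
  carrier := {x | b * x = x ∧ x * b = x}
  add_mem' := by
    rintro x y ⟨hx1, hx2⟩ ⟨hy1, hy2⟩
    exact ⟨by rw [mul_add, hx1, hy1], by rw [add_mul, hx2, hy2]⟩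
  zero_mem' := ⟨mul_zero b, zero_mul b⟩
  neg_mem' := by
    rintro x ⟨h1, h2⟩
    exact ⟨by rw [mul_neg, h1], by rw [neg_mul, h2]⟩
  mul_mem' := by
    rintro x y ⟨hx1, hx2⟩ ⟨hy1, hy2⟩
    refine ⟨by rw [← mul_assoc, hx1], by rw [mul_assoc, hy2]⟩

/-- The corner algebra `R·b` of a central idempotent `b`, as a type.  For a block `b`
of a group algebra `kG` this is the block algebra `kG·b`. -/
def Corner {R : Type*} [Ring R] (b : R) : Type _ := cornerSubring b

instance {R : Type*} [Ring R] (b : R) : NonUnitalRing (Corner b) :=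
  inferInstanceAs (NonUnitalRing (cornerSubring b))

/-- For `b` a central idempotent, the corner `R·b` is a unital ring with identity `b`. -/
instance {R : Type*} [Ring R] (b : R) [hb : Fact (IsCentralIdem b)] : Ring (Corner b) where
  __ := (inferInstance : NonUnitalRing (Corner b))
  one := ⟨b, hb.out.2, hb.out.2⟩
  one_mul x := Subtype.ext x.2.1
  mul_one x := Subtype.ext x.2.2

/-- For `b` a central idempotent in a `k`-algebra `R`, the corner `R·b` is a
`k`-algebra with unit `b`. -/
instance {k R : Type*} [CommSemiring k] [Ring R] [Algebra k R] (b : R)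
    [hb : Fact (IsCentralIdem b)] : Algebra k (Corner b) where
  algebraMap :=
    { toFun := fun c => ⟨c • b, by rw [mul_smul_comm, hb.out.2],
        by rw [smul_mul_assoc, hb.out.2]⟩
      map_one' := Subtype.ext (one_smul k b)
      map_mul' := fun c d => Subtype.ext <| by
        show (c * d) • b = (c • b) * (d • b)
        rw [smul_mul_assoc, mul_smul_comm, hb.out.2, smul_smul]
      map_zero' := Subtype.ext (zero_smul k b)
      map_add' := fun c d => Subtype.ext (add_smul c d b) }
  smul c x := ⟨c • x.1, by rw [mul_smul_comm, x.2.1], by rw [smul_mul_assoc, x.2.2]⟩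
  commutes' c x := Subtype.ext <| by
    show (c • b) * x.1 = x.1 * (c • b)
    rw [smul_mul_assoc, mul_smul_comm, x.2.1, x.2.2]
  smul_def' c x := Subtype.ext <| by
    show c • x.1 = (c • b) * x.1
    rw [smul_mul_assoc, x.2.1]

/-- The first Frobenius twist `A^(ℓ)` of a `k`-algebra `A`: the same ring, with the
`k`-action pulled back along `λ ↦ λ^{1/ℓ}`, i.e. `λ · x = λ^{1/ℓ} x`. -/
def FrobTwist (ℓ : ℕ) (A : Type*) : Type _ := A

instance (ℓ : ℕ) (A : Type*) [Ring A] : Ring (FrobTwist ℓ A) := inferInstanceAs (Ring A)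

noncomputable instance (ℓ : ℕ) [Fact ℓ.Prime] (k : Type*) [Field k] [IsAlgClosed k]
    [CharP k ℓ] (A : Type*) [Ring A] [Algebra k A] : Algebra k (FrobTwist ℓ A) :=
  RingHom.toAlgebra' ((algebraMap k A).comp ((frobeniusEquiv k ℓ).symm : k →+* k))
    (fun c x => Algebra.commutes (A := A) ((frobeniusEquiv k ℓ).symm c) x)

/-! The Frobenius map of `k` acts on coefficients and thus permutes the blocks of `kG`; it makes
the block algebra of `b` isomorphic, up to a twist, to that of the image of `b`.  So it suffices
that an automorphism of `G` carries this image back to `b`.  The coefficients of a central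
idempotent `e` vanish at elements of order divisible by `ℓ` and satisfy `e (g ^ ℓ) = e g ^ ℓ` at
the others.  Hence, if on the latter `g ↦ g ^ ℓ` is realized by automorphisms of `G`, the sum of an
orbit of blocks under `Aut G` has coefficients in `𝔽_ℓ` and is fixed by Frobenius, so the image of
`b` lies in the orbit of `b`.

For a double cover `G` of `A_n`, these automorphisms are conjugations in a double cover of `S_n`
containing `G`.  It is constructed from `G ≀ C₂` modulo a diagonal central involution, along the
Kaluzhnin–Krasner embedding of `S_n`.  If `x` lies over `A_n` and `m` is prime to the order of `x`,
then `x` and `x ^ m` have conjugate images in `S_n`, and the sign ambiguity in lifting the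
conjugation can be removed: by comparing orders if the image of `x` has odd order, and otherwise
because either the cover splits or `x` is a product of two non-commuting elements over disjoint odd
permutations. -/

universe u v

section FixedPoints

variable {ℓ : ℕ} [Fact ℓ.Prime]

theorem natCard_modEq_natCard_fixedPoints {X : Type*} [Finite X] {ρ : X → X} {N : ℕ}
    (hρ : ρ^[ℓ ^ N] = id) : Nat.card X ≡ Nat.card (Function.fixedPoints ρ) [MOD ℓ] := by
  classical
  have := Fintype.ofFinite X
  have hend : (show Function.End X from ρ) ^ ℓ ^ N = 1 :=
    (hom_coe_pow (fun f : Function.End X => (f : X → X)) rfl (fun _ _ => rfl) ρ _).symm.trans hρ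
  simpa only [Nat.card_eq_fintype_card] using Equiv.Perm.card_fixedPoints_modEq hend

theorem card_modEq_card_fixedPoints {X : Type*} [DecidableEq X] {ρ : X → X} {N : ℕ}
    (hρ : ρ^[ℓ ^ N] = id) {s : Finset X} (hs : ∀ x ∈ s, ρ x ∈ s) :
    s.card ≡ (s.filter fun x => ρ x = x).card [MOD ℓ] := by
  classical
  have hmaps : Set.MapsTo ρ s s := hs
  have hiter : (hmaps.restrict ρ s s)^[ℓ ^ N] = id := by
    rw [Set.MapsTo.iterate_restrict]
    ext x
    simp [hρ]
  have hmod := natCard_modEq_natCard_fixedPoints hiter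
  rw [Nat.card_coe_set_eq (Function.fixedPoints _),
    ← Set.ncard_image_of_injective _ Subtype.val_injective] at hmod
  have himage : Subtype.val '' Function.fixedPoints (hmaps.restrict ρ s s)
      = ↑(s.filter fun x => ρ x = x) := by
    ext x
    simp only [Set.mem_image, Function.mem_fixedPoints_iff, Subtype.exists,
      Subtype.ext_iff, Set.MapsTo.val_restrict_apply, Finset.coe_filter, Set.mem_ofPred_eq]
    aesop
  rw [himage, Set.ncard_coe_finset] at hmod
  simpa using hmod

theorem sum_eq_sum_fixedPoints {R X : Type*} [CommRing R] [CharP R ℓ] [Fintype X]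
    [DecidableEq X] {ρ : X → X} {N : ℕ} (hρ : ρ^[ℓ ^ N] = id)
    {f : X → R} (hf : ∀ x, f (ρ x) = f x) :
    ∑ x, f x = ∑ x with ρ x = x, f x := by
  classical
  rw [← Finset.sum_fiberwise_of_maps_to (g := f) (t := Finset.univ.image f) (by simp),
    ← Finset.sum_fiberwise_of_maps_to (g := f) (t := Finset.univ.image f) (by simp)]
  refine Finset.sum_congr rfl fun v _ => ?_
  rw [Finset.sum_eq_card_nsmul (b := v) (by simp), Finset.sum_eq_card_nsmul (b := v) (by simp),
    Finset.filter_comm, nsmul_eq_mul, nsmul_eq_mul,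
    (CharP.natCast_eq_natCast R ℓ).2 (card_modEq_card_fixedPoints hρ (by simp [hf]))]

theorem iterate_comp_add_one {ι : Type*} (m n : ℕ) (w : Fin (m + 1) → ι) :
    (fun (v : Fin (m + 1) → ι) j => v (j + 1))^[n] w = fun j => w (j + n • 1) := by
  induction n generalizing w with
  | zero => simp
  | succ n ih =>
    rw [Function.iterate_succ_apply, ih]
    simp only [succ_nsmul, add_assoc]

theorem comp_add_one_eq_iff {ι : Type*} {m : ℕ} {w : Fin (m + 1) → ι} :
    (fun j => w (j + 1)) = w ↔ ∀ j, w j = w 0 := by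
  refine ⟨fun h j => ?_, fun h => funext fun j => by rw [h, h j]⟩
  induction j using Fin.induction with
  | zero => rfl
  | succ i ih => rw [← ih, ← Fin.coeSucc_eq_succ]; exact congrFun h i.castSucc

theorem sum_words_eq_sum_const {R ι : Type*} [CommRing R] [CharP R ℓ] [Fintype ι]
    {m N : ℕ} (hm : m + 1 = ℓ ^ N) {F : (Fin (m + 1) → ι) → R}
    (hF : ∀ w, F (fun j => w (j + 1)) = F w) : ∑ w, F w = ∑ i, F fun _ => i := by
  classical
  have hiter : (fun (v : Fin (m + 1) → ι) j => v (j + 1))^[ℓ ^ N] = id := by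
    ext w j
    have hzero : (m + 1) • (1 : Fin (m + 1)) = 0 := by
      simpa using card_nsmul_eq_zero (x := (1 : Fin (m + 1)))
    simp only [iterate_comp_add_one, ← hm, hzero, add_zero, id]
  rw [sum_eq_sum_fixedPoints hiter hF]
  simp only [comp_add_one_eq_iff]
  refine (Finset.sum_bij' (fun i _ _ => i) (fun w _ => w 0) ?_ ?_ ?_ ?_ ?_).symm
  all_goals simp +contextual [funext_iff]

theorem sum_pow_eq_sum_words {R ι : Type*} [Semiring R] [Fintype ι] (f : ι → R) (n : ℕ) :
    (∑ i, f i) ^ n = ∑ w : Fin n → ι, (List.ofFn fun j => f (w j)).prod := by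
  induction n with
  | zero => simp
  | succ n ih =>
    rw [pow_succ', ih, Finset.sum_mul_sum, ← (Fin.consEquiv fun _ => ι).sum_comp,
      Fintype.sum_prod_type]
    simp [List.ofFn_succ]

end FixedPoints

section Coefficients

open MonoidAlgebra

variable {ℓ : ℕ} [Fact ℓ.Prime] {k G : Type*} [Group G]

theorem coeff_pow_eq_sum_words [CommSemiring k] [Fintype G] [DecidableEq G]
    (y : MonoidAlgebra k G) (n : ℕ) (u : G) :
    (y ^ n).coeff u =
      ∑ w : Fin n → G, if (List.ofFn w).prod = u then ∏ j, y.coeff (w j) else 0 := by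
  have hy : y = ∑ h, single h (y.coeff h) := by
    ext g
    simp [coeff_sum]
  have hword (w : Fin n → G) : (List.ofFn fun j => single (w j) (y.coeff (w j))).prod
      = single (List.ofFn w).prod (∏ j, y.coeff (w j)) := by
    clear hy
    induction n with
    | zero => simp [one_def]
    | succ n ih => simp [List.ofFn_succ, ih, Fin.prod_univ_succ, single_mul_single]
  conv_lhs => rw [hy, sum_pow_eq_sum_words]
  simp [coeff_sum, hword, Finsupp.single_apply]

theorem iterate_conj_comp {ι : Type*} (u : G) (n : ℕ) (w : ι → G) :
    (fun (v : ι → G) j => u * v j * u⁻¹)^[n] w = fun j => u ^ n * w j * (u ^ n)⁻¹ := by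
  induction n generalizing w with
  | zero => simp
  | succ n ih =>
    rw [Function.iterate_succ_apply, ih]
    simp only [pow_succ, mul_inv_rev, mul_assoc]

theorem prod_ofFn_conj (u : G) {n : ℕ} (w : Fin n → G) :
    (List.ofFn fun j => u * w j * u⁻¹).prod = u * (List.ofFn w).prod * u⁻¹ := by
  simpa [List.map_ofFn, Function.comp_def] using (map_list_prod (MulAut.conj u) (List.ofFn w)).symm

theorem prod_ofFn_comp_add_one {m : ℕ} (w : Fin (m + 1) → G) :
    (List.ofFn fun j => w (j + 1)).prod = (w 0)⁻¹ * (List.ofFn w).prod * w 0 := by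
  rw [List.ofFn_succ', List.ofFn_succ (f := w)]
  simp

/- Conjugation by `u` discards the words having a letter that does not commute with `u`; on the
others rotation preserves the condition that the product is `u`. -/
theorem coeff_pow_prime_pow [CommRing k] [CharP k ℓ] [Fintype G] [DecidableEq G]
    {y : MonoidAlgebra k G} {u : G} {N : ℕ} (hu : u ^ ℓ ^ N = 1)
    (hy : ∀ h, y.coeff (u * h * u⁻¹) = y.coeff h) :
    (y ^ ℓ ^ N).coeff u = ∑ h with h ^ ℓ ^ N = u, y.coeff h ^ ℓ ^ N := by
  obtain ⟨m, hm⟩ : ∃ m, m + 1 = ℓ ^ N :=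
    ⟨ℓ ^ N - 1, Nat.sub_add_cancel (Nat.one_le_pow _ _ (Fact.out : ℓ.Prime).pos)⟩
  have hconj : (fun (w : Fin (m + 1) → G) j => u * w j * u⁻¹)^[ℓ ^ N] = id := by
    ext w j
    simp [iterate_conj_comp, hu]
  rw [← hm, coeff_pow_eq_sum_words,
    sum_eq_sum_fixedPoints hconj (by simp [prod_ofFn_conj, hy, mul_inv_eq_iff_eq_mul]),
    Finset.sum_filter, sum_words_eq_sum_const hm, Finset.sum_filter]
  · refine Finset.sum_congr rfl fun h _ => ?_
    have hcomm : h ^ (m + 1) = u → (fun _ : Fin (m + 1) => u * h * u⁻¹) = fun _ => h := by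
      rintro rfl
      simp [(Commute.self_pow h (m + 1)).symm.eq]
    simp only [List.ofFn_const, List.prod_replicate, Finset.prod_const, Finset.card_univ,
      Fintype.card_fin]
    grind
  · intro w
    have hletters : (∏ j, y.coeff (w (j + 1))) = ∏ j, y.coeff (w j) :=
      Equiv.prod_comp (Equiv.addRight (1 : Fin (m + 1))) fun j => y.coeff (w j)
    have hfixed : (fun j => u * w (j + 1) * u⁻¹) = (fun j => w (j + 1))
        ↔ (fun j => u * w j * u⁻¹) = w := by
      simp only [funext_iff]
      exact Equiv.forall_congr_right (Equiv.addRight (1 : Fin (m + 1)))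
        (q := fun j => u * w j * u⁻¹ = w j)
    simp only [hletters, hfixed, prod_ofFn_comp_add_one]
    refine ite_congr rfl (fun hw => if_congr ?_ rfl rfl) fun _ => rfl
    have hcomm : u * w 0 = w 0 * u := mul_inv_eq_iff_eq_mul.1 (congrFun hw 0)
    rw [mul_assoc, inv_mul_eq_iff_eq_mul, ← hcomm, mul_left_inj]

theorem exists_regular_part_exponent (ℓ : ℕ) [Fact ℓ.Prime] (G : Type*) [Group G] [Finite G] :
    ∃ N, (∀ x : G, ¬ ℓ ∣ orderOf (x ^ ℓ ^ N)) ∧ ∀ x : G, ¬ ℓ ∣ orderOf x → x ^ ℓ ^ N = x := by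
  have hp : ℓ.Prime := Fact.out
  obtain ⟨a, r, hr, hcard⟩ :=
    Nat.exists_eq_pow_mul_and_not_dvd (Nat.card_pos (α := G)).ne' ℓ hp.ne_one
  have hcop : ℓ.Coprime r := hp.coprime_iff_not_dvd.2 hr
  have hr0 : r ≠ 0 := fun h => hr (h ▸ dvd_zero ℓ)
  refine ⟨a * r.totient, fun x hx => ?_, fun x hx => ?_⟩
  · have hpow : x ^ (ℓ ^ (a * r.totient) * r) = 1 := orderOf_dvd_iff_pow_eq_one.1 <|
      (orderOf_dvd_natCard x).trans <| hcard ▸ mul_dvd_mul_right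
        (pow_dvd_pow ℓ (Nat.le_mul_of_pos_right a (Nat.totient_pos.2 hr0.bot_lt))) r
    exact hr (hx.trans (orderOf_dvd_of_pow_eq_one (by rwa [← pow_mul])))
  · have hdvd : orderOf x ∣ r :=
      (Nat.Coprime.pow_right a (hp.coprime_iff_not_dvd.2 hx).symm).dvd_of_dvd_mul_left
        (hcard ▸ orderOf_dvd_natCard x)
    have hmod : ℓ ^ (a * r.totient) ≡ 1 [MOD r] := by
      rw [mul_comm, pow_mul]
      simpa using (Nat.ModEq.pow_totient hcop).pow a
    simpa using pow_eq_pow_iff_modEq.2 (hmod.of_dvd hdvd)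

theorem IsCentralIdem.coeff_mul_comm [Ring k] {e : MonoidAlgebra k G} (he : IsCentralIdem e)
    (x y : G) : e.coeff (x * y) = e.coeff (y * x) := by
  simpa [coeff_mul_single_apply, coeff_single_mul_apply, mul_assoc] using
    congrArg (fun z => z.coeff (x * y * x)) (he.1 (single x 1))

theorem IsCentralIdem.mul_single_pow [Ring k] {e : MonoidAlgebra k G} (he : IsCentralIdem e)
    (g : G) {n : ℕ} (hn : n ≠ 0) : (e * single g 1) ^ n = e * single (g ^ n) 1 := by
  rw [Commute.mul_pow (he.1 _), IsIdempotentElem.pow_eq he.2 hn, single_pow, one_pow]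

variable [CommRing k] [CharP k ℓ] {e : MonoidAlgebra k G}

theorem IsCentralIdem.coeff_mul_pow_prime_pow [Fintype G] [DecidableEq G]
    (he : IsCentralIdem e) {u s : G} {N : ℕ} (hu : u ^ ℓ ^ N = 1) (hcomm : Commute u s) :
    e.coeff (u * s ^ ℓ ^ N) = ∑ h with h ^ ℓ ^ N = u, e.coeff (h * s) ^ ℓ ^ N := by
  have hconj (h : G) : (e * single s⁻¹ 1).coeff (u * h * u⁻¹) = (e * single s⁻¹ 1).coeff h := by
    simp only [coeff_mul_single_apply, inv_inv, mul_one]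
    rw [mul_assoc, hcomm.inv_left.eq, ← mul_assoc, he.coeff_mul_comm]
    simp [mul_assoc]
  have hpow := coeff_pow_prime_pow hu hconj
  rw [he.mul_single_pow _ (pow_ne_zero _ (Fact.out : ℓ.Prime).ne_zero)] at hpow
  simpa [coeff_mul_single_apply] using hpow

variable [Finite G]

theorem IsCentralIdem.coeff_eq_zero_of_dvd_orderOf (he : IsCentralIdem e) {g : G}
    (hg : ℓ ∣ orderOf g) : e.coeff g = 0 := by
  classical
  have := Fintype.ofFinite G
  obtain ⟨N, hregular, hpow⟩ := exists_regular_part_exponent ℓ G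
  set s := g ^ ℓ ^ N with hs
  have hcomm : Commute g s := Commute.self_pow g _
  have hu : (g * s⁻¹) ^ ℓ ^ N = 1 := by
    rw [hcomm.inv_right.mul_pow, inv_pow, hpow s (hregular g), mul_inv_cancel]
  have hsum := he.coeff_mul_pow_prime_pow hu (hcomm.mul_left (Commute.refl s).inv_left)
  rw [hpow s (hregular g), inv_mul_cancel_right] at hsum
  rw [hsum, Finset.filter_eq_empty_iff.2, Finset.sum_empty]
  intro h _ hh
  have hgs : g * s⁻¹ = 1 := by rw [← hu, hpow _ (hh ▸ hregular h)]
  exact hregular g (hs ▸ mul_inv_eq_one.1 hgs ▸ hg)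

theorem IsCentralIdem.coeff_pow_char (he : IsCentralIdem e) {g : G} (hg : ¬ ℓ ∣ orderOf g) :
    e.coeff (g ^ ℓ) = e.coeff g ^ ℓ := by
  classical
  have := Fintype.ofFinite G
  obtain ⟨N, hregular, hpow⟩ := exists_regular_part_exponent ℓ G
  have hN := he.coeff_mul_pow_prime_pow (one_pow (ℓ ^ N)) (Commute.one_left g)
  have hN' := he.coeff_mul_pow_prime_pow (one_pow (ℓ ^ (N + 1))) (Commute.one_left g)
  have hroots (h : G) : (h ^ ℓ ^ N) ^ ℓ = 1 ↔ h ^ ℓ ^ N = 1 := by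
    refine ⟨fun hh => ?_, fun hh => by rw [hh, one_pow]⟩
    have hcop : (orderOf (h ^ ℓ ^ N)).Coprime ℓ :=
      ((Fact.out : ℓ.Prime).coprime_iff_not_dvd.2 (hregular h)).symm
    exact orderOf_eq_one_iff.1 (hcop.eq_one_of_dvd (orderOf_dvd_of_pow_eq_one hh))
  simp only [one_mul, pow_succ, pow_mul, hpow g hg, hroots] at hN hN'
  rw [hN', hN, sum_pow_char]

theorem IsCentralIdem.coeff_pow_char_eq_self (he : IsCentralIdem e)
    (hinv : ∀ (φ : MulAut G) g, e.coeff (φ g) = e.coeff g)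
    (hG : ∀ g : G, ¬ ℓ ∣ orderOf g → ∃ φ : MulAut G, φ g = g ^ ℓ) (g : G) :
    e.coeff g ^ ℓ = e.coeff g := by
  by_cases hg : ℓ ∣ orderOf g
  · rw [he.coeff_eq_zero_of_dvd_orderOf hg, zero_pow (Fact.out : ℓ.Prime).ne_zero]
  · obtain ⟨φ, hφ⟩ := hG g hg
    rw [← he.coeff_pow_char hg, ← hφ, hinv]

end Coefficients

section Blocks

variable {R S : Type*} [Ring R] [Ring S] {b c : R}

theorem IsCentralIdem.mul (hb : IsCentralIdem b) (hc : IsCentralIdem c) : IsCentralIdem (b * c) :=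
  ⟨fun x => (Commute.mul_left (hb.1 x) (hc.1 x)).eq,
    IsIdempotentElem.mul_of_commute (hb.1 c) hb.2 hc.2⟩

theorem IsCentralIdem.sub (hb : IsCentralIdem b) (hc : IsCentralIdem c) (h : b * c = c) :
    IsCentralIdem (b - c) := by
  refine ⟨fun x => (Commute.sub_left (hb.1 x) (hc.1 x)).eq, ?_⟩
  rw [sub_mul, mul_sub, mul_sub, hb.2, hc.2, ← hb.1, h, sub_self, sub_zero]

theorem IsBlock.mul_eq_self (hb : IsBlock b) (hc : IsCentralIdem c) (h : b * c ≠ 0) :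
    b * c = b := by
  have hbc : b * (b * c) = b * c := by rw [← mul_assoc, hb.1.2]
  have horth : b * c * (b - b * c) = 0 := by
    rw [mul_sub, (hb.1.mul hc).2, (hb.1.mul hc).1, hbc, sub_self]
  have hsplit := hb.2.2 _ _ (hb.1.mul hc) (hb.1.sub (hb.1.mul hc) hbc) horth (by abel)
  exact (sub_eq_zero.1 (hsplit.resolve_left h)).symm

theorem IsBlock.eq_of_mul_ne_zero (hb : IsBlock b) (hc : IsBlock c) (h : b * c ≠ 0) : b = c := by
  rw [← hb.mul_eq_self hc.1 h, hb.1.1, hc.mul_eq_self hb.1 (by rwa [← hb.1.1])]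

theorem IsCentralIdem.map (f : R ≃+* S) (hb : IsCentralIdem b) : IsCentralIdem (f b) := by
  refine ⟨fun x => ?_, by rw [← map_mul, hb.2]⟩
  obtain ⟨y, rfl⟩ := f.surjective x
  rw [← map_mul, hb.1, map_mul]

theorem IsBlock.map (f : R ≃+* S) (hb : IsBlock b) : IsBlock (f b) := by
  refine ⟨hb.1.map f, by simpa using hb.2.1, fun c d hc hd hcd h => ?_⟩
  simpa using hb.2.2 (f.symm c) (f.symm d) (hc.map f.symm) (hd.map f.symm)
    (by rw [← map_mul, hcd, map_zero]) (by rw [← map_add, ← h, f.symm_apply_apply])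

theorem IsCentralIdem.sum {ι : Type*} [Fintype ι] {f : ι → R} (hf : ∀ i, IsCentralIdem (f i))
    (horth : Pairwise fun i j => f i * f j = 0) : IsCentralIdem (∑ i, f i) :=
  ⟨fun x => (Commute.sum_left _ _ _ fun i _ => (hf i).1 x).eq,
    (OrthogonalIdempotents.mk (fun i => (hf i).2) horth).isIdempotentElem_sum⟩

theorem IsBlock.exists_smul_eq {Γ : Type*} [Group Γ] [Finite Γ] [MulSemiringAction Γ R]
    (σ : R ≃+* R) (hσ : ∀ e, IsCentralIdem e → (∀ γ : Γ, γ • e = e) → σ e = e) (hb : IsBlock b) :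
    ∃ γ : Γ, γ • σ b = b := by
  have : Finite (MulAction.orbit Γ b) := Set.finite_range _
  have := Fintype.ofFinite (MulAction.orbit Γ b)
  have hblock (c : MulAction.orbit Γ b) : IsBlock (c : R) := by
    obtain ⟨_, γ, rfl⟩ := c
    exact hb.map (MulSemiringAction.toRingEquiv Γ R γ)
  have horth : Pairwise fun c d : MulAction.orbit Γ b => (c * d : R) = 0 := fun c d hcd =>
    not_not.1 fun h => hcd (Subtype.ext ((hblock c).eq_of_mul_ne_zero (hblock d) h))
  set e : R := ∑ c : MulAction.orbit Γ b, (c : R) with he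
  have hinv (γ : Γ) : γ • e = e := by
    rw [he, Finset.smul_sum]
    exact Equiv.sum_comp (MulAction.toPerm γ) fun c : MulAction.orbit Γ b => (c : R)
  have hbe : b * e = b := by
    rw [he, Finset.mul_sum, Fintype.sum_eq_single ⟨b, MulAction.mem_orbit_self b⟩, hb.1.2]
    exact fun c hc => horth hc.symm
  have hσbe : σ b * e = σ b := by
    rw [← hσ e (.sum (fun c => (hblock c).1) horth) hinv, ← map_mul, hbe]
  have hne : ∑ c : MulAction.orbit Γ b, σ b * c ≠ 0 := by
    rw [← Finset.mul_sum, ← he, hσbe]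
    exact (hb.map σ).2.1
  obtain ⟨⟨_, γ, rfl⟩, -, hγ⟩ := Finset.exists_ne_zero_of_sum_ne_zero hne
  have hσb : σ b = γ • b := (hb.map σ).eq_of_mul_ne_zero (hblock ⟨_, γ, rfl⟩) hγ
  exact ⟨γ⁻¹, by rw [hσb, inv_smul_smul]⟩

open MonoidAlgebra

variable {ℓ : ℕ} [Fact ℓ.Prime] {k G : Type*} [Group G] [Field k] [CharP k ℓ]

theorem IsBlock.exists_semilinear_ringEquiv [PerfectRing k ℓ] [Finite G] {b : MonoidAlgebra k G}
    (hb : IsBlock b) (hG : ∀ g : G, ¬ ℓ ∣ orderOf g → ∃ φ : MulAut G, φ g = g ^ ℓ) :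
    ∃ ψ : MonoidAlgebra k G ≃+* MonoidAlgebra k G,
      (∀ (a : k) x, ψ (a • x) = a ^ ℓ • ψ x) ∧ ψ b = b := by
  let act : MulAut G →* (MonoidAlgebra k G ≃ₐ[k] MonoidAlgebra k G) := domCongrAut
  let := MulSemiringAction.compHom (MonoidAlgebra k G) act
  let σ := mapRingEquiv G (frobeniusEquiv k ℓ)
  have hσ (e : MonoidAlgebra k G) (he : IsCentralIdem e) (hinv : ∀ φ : MulAut G, act φ e = e) :
      σ e = e := by
    ext g
    refine (coeff_mapRingEquiv _ _ _).trans (he.coeff_pow_char_eq_self (fun φ h => ?_) hG g)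
    conv_lhs => rw [← hinv φ]
    simp [act]
  obtain ⟨φ, hφ⟩ := hb.exists_smul_eq σ hσ
  refine ⟨σ.trans (act φ).toRingEquiv, fun a x => ?_, hφ⟩
  ext g
  simp [σ, act, frobenius_def, mul_pow]

end Blocks

section Morita

variable {ℓ : ℕ} [Fact ℓ.Prime] {k : Type*} [Field k] [IsAlgClosed k] [CharP k ℓ]
  {R : Type*} [Ring R] {b : R}

theorem map_mem_cornerSubring {ψ : R ≃+* R} (hψ : ψ b = b) {x : R} (hx : x ∈ cornerSubring b) :
    ψ x ∈ cornerSubring b := by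
  obtain ⟨hleft, hright⟩ := hx
  exact ⟨by rw [← hψ, ← map_mul, hleft], by rw [← hψ, ← map_mul, hright]⟩

/-- The automorphism of the corner at `b` induced by a ring automorphism fixing `b`. -/
def cornerRingEquiv [Fact (IsCentralIdem b)] (ψ : R ≃+* R) (hψ : ψ b = b) :
    Corner b ≃+* Corner b where
  toFun x := (⟨ψ x.1, map_mem_cornerSubring hψ x.2⟩ : cornerSubring b)
  invFun x := (⟨ψ.symm x.1,
    map_mem_cornerSubring (ψ.symm_apply_eq.2 hψ.symm) x.2⟩ : cornerSubring b)
  left_inv _ := Subtype.ext (ψ.symm_apply_apply _)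
  right_inv _ := Subtype.ext (ψ.apply_symm_apply _)
  map_mul' _ _ := Subtype.ext (map_mul ψ _ _)
  map_add' _ _ := Subtype.ext (map_add ψ _ _)

theorem nonempty_frobTwist_corner_algEquiv [Algebra k R] [Fact (IsCentralIdem b)] {ψ : R ≃+* R}
    (hψ : ∀ (a : k) x, ψ (a • x) = a ^ ℓ • ψ x) (hb : ψ b = b) :
    Nonempty (FrobTwist ℓ (Corner b) ≃ₐ[k] Corner b) := by
  let e : FrobTwist ℓ (Corner b) ≃+* Corner b := cornerRingEquiv ψ hb
  refine ⟨AlgEquiv.ofRingEquiv (f := e) fun a => Subtype.ext ?_⟩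
  change ψ ((frobeniusEquiv k ℓ).symm a • b) = a • b
  rw [hψ, hb, frobeniusEquiv_symm_pow_p]

theorem IsBlock.moritaEquivalent_frobTwist {k : Type u} [Field k] [IsAlgClosed k] [CharP k ℓ]
    {G : Type v} [Group G] [Finite G]
    (hG : ∀ g : G, ¬ ℓ ∣ orderOf g → ∃ φ : MulAut G, φ g = g ^ ℓ)
    {b : MonoidAlgebra k G} (hb : IsBlock b) [Fact (IsCentralIdem b)] :
    ∃ E : ModuleCat.{max u v} (Corner b) ≌ ModuleCat.{max u v} (FrobTwist ℓ (Corner b)),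
      ∃ _ : E.functor.Additive, E.functor.Linear k := by
  obtain ⟨ψ, hψ, hψb⟩ := hb.exists_semilinear_ringEquiv hG
  obtain ⟨e⟩ := nonempty_frobTwist_corner_algEquiv hψ hψb
  let M := MoritaEquivalence.ofAlgEquiv e.symm
  exact ⟨M.eqv, inferInstance, M.linear⟩

end Morita

section CoxeterTypeA

open scoped Pointwise

/-- The elements `T 0, …, T (N - 1)` of a group satisfy the Coxeter relations of type `A_N`, written
as involution, braid and far-commutation relations.  Indices are natural numbers, so that
inductions can pass to a smaller `N`; the values `T i` with `N ≤ i` are irrelevant. -/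
structure SatisfiesBraidRelations {Q : Type*} [Group Q] (N : ℕ) (T : ℕ → Q) : Prop where
  mul_self : ∀ i < N, T i * T i = 1
  braid : ∀ i, i + 1 < N → T i * T (i + 1) * T i = T (i + 1) * T i * T (i + 1)
  comm : ∀ i j, i + 2 ≤ j → j < N → T i * T j = T j * T i

/-- The product `T j * T (j - 1) * ⋯` of `r` factors with descending indices.  For generators of the
symmetric group these are the coset representatives, for `r ≤ j + 1`, of the subgroup generated by
the `T i` with `i < j` in the one generated by the `T i` with `i ≤ j`. -/
def descProd {Q : Type*} [Group Q] (T : ℕ → Q) (j : ℕ) : ℕ → Q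
  | 0 => 1
  | r + 1 => descProd T j r * T (j - r)

namespace SatisfiesBraidRelations

variable {Q : Type*} [Group Q] {N : ℕ} {T : ℕ → Q} (hT : SatisfiesBraidRelations N T)
include hT

theorem mono {M : ℕ} (h : M ≤ N) : SatisfiesBraidRelations M T where
  mul_self i hi := hT.mul_self i (by lia)
  braid i hi := hT.braid i (by lia)
  comm i j hij hj := hT.comm i j hij (by lia)

theorem descProd_mul_of_add_lt {i j r : ℕ} (hj : j < N) (h : i + r < j) :
    descProd T j r * T i = T i * descProd T j r := by
  induction r with
  | zero => rw [descProd, one_mul, mul_one]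
  | succ r ih =>
    rw [descProd, mul_assoc, ← hT.comm i (j - r) (by lia) (by lia), ← mul_assoc, ih (by lia),
      mul_assoc]

theorem descProd_mul_succ_of_lt_add {i j r : ℕ} (hj : j < N) (hr : r ≤ j + 1) (hij : i + 1 ≤ j)
    (h : j < i + r) : descProd T j r * T (i + 1) = T i * descProd T j r := by
  induction r with
  | zero => lia
  | succ r ih =>
    obtain h' | rfl : j < i + r ∨ j = i + r := by lia
    · rw [descProd, mul_assoc, hT.comm (j - r) (i + 1) (by lia) (by lia), ← mul_assoc,
        ih (by lia) h', mul_assoc]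
    · obtain ⟨t, rfl⟩ : ∃ t, r = t + 1 := Nat.exists_eq_succ_of_ne_zero (by lia)
      have hi : i + (t + 1) - (t + 1) = i := by lia
      have hi' : i + (t + 1) - t = i + 1 := by lia
      calc descProd T (i + (t + 1)) t * T (i + (t + 1) - t) * T (i + (t + 1) - (t + 1)) * T (i + 1)
          = descProd T (i + (t + 1)) t * (T (i + 1) * T i * T (i + 1)) := by
            simp only [hi, hi', mul_assoc]
        _ = descProd T (i + (t + 1)) t * T i * (T (i + 1) * T i) := by
            simp only [← hT.braid i (by lia), mul_assoc]
        _ = T i * (descProd T (i + (t + 1)) t * T (i + 1) * T i) := by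
            rw [hT.descProd_mul_of_add_lt hj (by lia)]
            simp only [mul_assoc]
        _ = _ := by simp only [descProd, hi, hi']

theorem mul_descProd_mul_mem {i j r : ℕ} (hj : j < N) (hi : i ≤ j) (hr : r ≤ j + 1)
    {h : Q} (hh : h ∈ Subgroup.closure (T '' Set.Iio j)) :
    h * descProd T j r * T i ∈
      (Subgroup.closure (T '' Set.Iio j) : Set Q) * descProd T j '' Set.Iic (j + 1) := by
  have hgen {i : ℕ} (hi : i < j) : h * T i ∈ Subgroup.closure (T '' Set.Iio j) :=
    mul_mem hh (Subgroup.subset_closure ⟨i, hi, rfl⟩)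
  have key : ∃ h' ∈ Subgroup.closure (T '' Set.Iio j), ∃ r' ≤ j + 1,
      h' * descProd T j r' = h * descProd T j r * T i := by
    obtain hlt | heq | heq | hgt : i + r < j ∨ i + r = j ∨ i + r = j + 1 ∨ j + 1 < i + r := by lia
    · refine ⟨h * T i, hgen (by lia), r, hr, ?_⟩
      rw [mul_assoc, ← hT.descProd_mul_of_add_lt hj hlt, mul_assoc]
    · refine ⟨h, hh, r + 1, by lia, ?_⟩
      rw [descProd, ← heq, Nat.add_sub_cancel, mul_assoc]
    · obtain ⟨t, rfl⟩ : ∃ t, r = t + 1 := Nat.exists_eq_succ_of_ne_zero (by lia)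
      refine ⟨h, hh, t, by lia, ?_⟩
      rw [descProd, show j - t = i by lia, mul_assoc, mul_assoc, hT.mul_self i (by lia), mul_one]
    · obtain ⟨i, rfl⟩ : ∃ t, i = t + 1 := Nat.exists_eq_succ_of_ne_zero (by lia)
      refine ⟨h * T i, hgen (by lia), r, hr, ?_⟩
      rw [mul_assoc, ← hT.descProd_mul_succ_of_lt_add hj hr hi (by lia), mul_assoc]
  obtain ⟨h', hh', r', hr', heq⟩ := key
  exact heq ▸ Set.mul_mem_mul hh' ⟨r', hr', rfl⟩

theorem closure_subset_mul {j : ℕ} (hj : j < N) :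
    (Subgroup.closure (T '' Set.Iio (j + 1)) : Set Q) ⊆
      (Subgroup.closure (T '' Set.Iio j) : Set Q) * descProd T j '' Set.Iic (j + 1) := by
  have hstep (x y : Q) (hy : y ∈ T '' Set.Iio (j + 1))
      (hx : x ∈ (Subgroup.closure (T '' Set.Iio j) : Set Q) * descProd T j '' Set.Iic (j + 1)) :
      x * y ∈ (Subgroup.closure (T '' Set.Iio j) : Set Q) * descProd T j '' Set.Iic (j + 1) := by
    obtain ⟨h, hh, _, ⟨r, hr, rfl⟩, rfl⟩ := hx
    obtain ⟨i, hi, rfl⟩ := hy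
    exact hT.mul_descProd_mul_mem hj (Nat.lt_succ_iff.1 hi) hr hh
  intro x hx
  induction hx using Subgroup.closure_induction_right with
  | one => exact ⟨1, one_mem _, 1, ⟨0, Nat.zero_le _, rfl⟩, one_mul 1⟩
  | mul_right x _ y hy ih => exact hstep x y hy ih
  | mul_inv_cancel x _ y hy ih =>
    obtain ⟨i, hi, rfl⟩ := hy
    have hi' : i < N := by have := Set.mem_Iio.1 hi; lia
    rw [inv_eq_of_mul_eq_one_right (hT.mul_self i hi')]
    exact hstep x _ ⟨i, hi, rfl⟩ ih

theorem finite_closure_and_natCard_closure_le :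
    Finite (Subgroup.closure (T '' Set.Iio N)) ∧
      Nat.card (Subgroup.closure (T '' Set.Iio N)) ≤ (N + 1).factorial := by
  induction N with
  | zero => simpa using inferInstanceAs (Finite (⊥ : Subgroup Q))
  | succ j ih =>
    obtain ⟨hfin, hcard⟩ := ih (hT.mono j.le_succ)
    have hsub := hT.closure_subset_mul j.lt_succ_self
    have himage : (descProd T j '' Set.Iic (j + 1)).Finite := (Set.finite_Iic _).image _
    have hfin' := (Set.toFinite (Subgroup.closure (T '' Set.Iio j) : Set Q)).mul himage
    refine ⟨hfin'.subset hsub, ?_⟩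
    calc Nat.card (Subgroup.closure (T '' Set.Iio (j + 1)))
        ≤ Nat.card
            ↥((Subgroup.closure (T '' Set.Iio j) : Set Q) * descProd T j '' Set.Iic (j + 1)) :=
          Nat.card_mono hfin' hsub
      _ ≤ Nat.card (Subgroup.closure (T '' Set.Iio j)) *
            Nat.card (descProd T j '' Set.Iic (j + 1)) :=
          Set.natCard_mul_le
      _ ≤ (j + 1).factorial * (j + 2) := by
          refine Nat.mul_le_mul hcard ((Nat.card_image_le (Set.finite_Iic _)).trans ?_)
          simp
      _ = (j + 2).factorial := by rw [Nat.factorial_succ (j + 1), mul_comm]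

end SatisfiesBraidRelations

variable {Q : Type*} [Group Q] {N : ℕ}

theorem isLiftable_A_iff {T : Fin N → Q} : (CoxeterMatrix.A N).IsLiftable T ↔
    (∀ i, T i * T i = 1) ∧ (∀ i j : Fin N, (i : ℕ) + 1 = j → (T i * T j) ^ 3 = 1) ∧
      ∀ i j : Fin N, (i : ℕ) + 2 ≤ j → (T i * T j) ^ 2 = 1 := by
  have hA (i j : Fin N) : CoxeterMatrix.A N i j =
      if i = j then 1 else if (j : ℕ) + 1 = i ∨ (i : ℕ) + 1 = j then 3 else 2 := rfl
  constructor
  · intro h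
    refine ⟨fun i => ?_, fun i j hij => ?_, fun i j hij => ?_⟩
    · simpa using h i i
    · have := h i j
      rwa [hA, if_neg (by rintro rfl; lia), if_pos (Or.inr hij)] at this
    · have := h i j
      rwa [hA, if_neg (by rintro rfl; lia), if_neg (by lia)] at this
  · rintro ⟨hsq, hbraid, hcomm⟩
    have hle (i j : Fin N) (hij : i ≤ j) : (T i * T j) ^ CoxeterMatrix.A N i j = 1 := by
      rw [hA]
      split_ifs with h h'
      · rw [h, pow_one, hsq]
      · exact hbraid i j (by lia)
      · exact hcomm i j (by lia)
    intro i j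
    obtain hij | hji := le_total i j
    · exact hle i j hij
    · have hinv (l : Fin N) : (T l)⁻¹ = T l := inv_eq_of_mul_eq_one_right (hsq l)
      rw [← inv_inj, ← inv_pow, mul_inv_rev, hinv, hinv, CoxeterMatrix.symmetric, hle j i hji,
        inv_one]

theorem SatisfiesBraidRelations.of_isLiftable {T : Fin N → Q}
    (hT : (CoxeterMatrix.A N).IsLiftable T) :
    SatisfiesBraidRelations N fun i => if h : i < N then T ⟨i, h⟩ else 1 := by
  obtain ⟨hsq, hbraid, hcomm⟩ := isLiftable_A_iff.1 hT
  have hinv (i : Fin N) : (T i)⁻¹ = T i := inv_eq_of_mul_eq_one_right (hsq i)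
  refine ⟨fun i hi => ?_, fun i hi => ?_, fun i j hij hj => ?_⟩
  · simp only [hi, dite_true, hsq]
  · simp only [hi, (Nat.lt_succ_self i).trans hi, dite_true]
    rw [← mul_inv_eq_one, ← hbraid ⟨i, by lia⟩ ⟨i + 1, hi⟩ rfl]
    simp only [mul_inv_rev, hinv, pow_succ, pow_zero, one_mul, mul_assoc]
  · simp only [hj, (show i < N by lia), dite_true]
    rw [← mul_inv_eq_one, ← hcomm ⟨i, by lia⟩ ⟨j, hj⟩ hij]
    simp only [mul_inv_rev, hinv, pow_two, mul_assoc]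

theorem nodup_castSucc_succ {i j : Fin N} (hij : (i : ℕ) + 2 ≤ j) :
    [i.castSucc, i.succ, j.castSucc, j.succ].Nodup := by
  simp only [List.nodup_cons, List.mem_cons, List.not_mem_nil, Fin.ext_iff, Fin.val_castSucc,
    Fin.val_succ, or_false, not_false_eq_true, List.nodup_nil, and_true]
  lia

theorem isLiftable_swap :
    (CoxeterMatrix.A N).IsLiftable fun i : Fin N => Equiv.swap i.castSucc i.succ := by
  refine isLiftable_A_iff.2 ⟨fun i => Equiv.swap_mul_self _ _, fun i j hij => ?_, fun i j hij => ?_⟩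
  · have hj : j.castSucc = i.succ := Fin.ext hij.symm
    have h : (Equiv.swap i.succ i.castSucc * Equiv.swap i.succ j.succ).IsThreeCycle :=
      Equiv.Perm.isThreeCycle_swap_mul_swap_same (by simp [Fin.ext_iff])
        (by simp only [ne_eq, Fin.ext_iff, Fin.val_succ]; lia)
        (by simp only [ne_eq, Fin.ext_iff, Fin.val_succ, Fin.val_castSucc]; lia)
    rw [hj, Equiv.swap_comm i.castSucc, ← h.orderOf, pow_orderOf_eq_one]
  · have h := (Equiv.Perm.disjoint_swap_swap (nodup_castSucc_succ hij)).commute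
    rw [h.mul_pow, pow_two, pow_two, Equiv.swap_mul_self, Equiv.swap_mul_self, one_mul]

theorem finite_group_A_and_natCard_group_A_le (N : ℕ) :
    Finite (CoxeterMatrix.A N).Group ∧ Nat.card (CoxeterMatrix.A N).Group ≤ (N + 1).factorial := by
  let cs := (CoxeterMatrix.A N).toCoxeterSystem
  have himage : (fun i => if h : i < N then cs.simple ⟨i, h⟩ else 1) '' Set.Iio N =
      Set.range cs.simple := by
    ext x
    constructor
    · rintro ⟨i, hi, rfl⟩
      exact ⟨⟨i, hi⟩, by simp only [Set.mem_Iio.1 hi, dite_true]⟩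
    · rintro ⟨i, rfl⟩
      exact ⟨i, i.2, dif_pos i.2⟩
  have h := (SatisfiesBraidRelations.of_isLiftable
    cs.simple_mul_simple_pow).finite_closure_and_natCard_closure_le
  rw [himage, cs.subgroup_closure_range_simple, Subgroup.card_top] at h
  exact ⟨@Finite.of_equiv _ _ h.1 Subgroup.topEquiv.toEquiv, h.2⟩

/-- The homomorphism from the Coxeter group of type `A` to the symmetric group that sends the simple
reflections to the adjacent transpositions. -/
def coxeterGroupAToPerm (N : ℕ) : (CoxeterMatrix.A N).Group →* Equiv.Perm (Fin (N + 1)) :=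
  (CoxeterMatrix.A N).toCoxeterSystem.lift ⟨_, isLiftable_swap⟩

theorem coxeterGroupAToPerm_simple {N : ℕ} (i : Fin N) :
    coxeterGroupAToPerm N ((CoxeterMatrix.A N).simple i) = Equiv.swap i.castSucc i.succ :=
  (CoxeterMatrix.A N).toCoxeterSystem.lift_apply_simple isLiftable_swap i

theorem bijective_coxeterGroupAToPerm (N : ℕ) : Function.Bijective (coxeterGroupAToPerm N) := by
  obtain ⟨_, hcard⟩ := finite_group_A_and_natCard_group_A_le N
  refine Function.Surjective.bijective_of_nat_card_le ?_ ?_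
  · rw [← MonoidHom.mrange_eq_top, eq_top_iff, ← Equiv.Perm.mclosure_swap_castSucc_succ,
      Submonoid.closure_le]
    rintro _ ⟨i, rfl⟩
    exact ⟨_, coxeterGroupAToPerm_simple i⟩
  · rwa [Nat.card_eq_fintype_card (α := Equiv.Perm _), Fintype.card_perm, Fintype.card_fin]

/-- The Coxeter system of type `A` on the symmetric group formed by the adjacent transpositions. -/
noncomputable def permCoxeterSystem (N : ℕ) :
    CoxeterSystem (CoxeterMatrix.A N) (Equiv.Perm (Fin (N + 1))) :=
  (CoxeterMatrix.A N).toCoxeterSystem.map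
    (MulEquiv.ofBijective _ (bijective_coxeterGroupAToPerm N))

theorem permCoxeterSystem_simple {N : ℕ} (i : Fin N) :
    (permCoxeterSystem N).simple i = Equiv.swap i.castSucc i.succ :=
  coxeterGroupAToPerm_simple i

end CoxeterTypeA

section Permutations

theorem cycleType_pow_of_coprime {α : Type*} [Fintype α] [DecidableEq α] (σ : Equiv.Perm α)
    {m : ℕ} (h : (orderOf σ).Coprime m) : (σ ^ m).cycleType = σ.cycleType := by
  induction σ using Equiv.Perm.cycle_induction_on with
  | base_one => rw [one_pow]
  | base_cycles σ hσ =>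
    rw [(hσ.pow_iff.2 h.symm).cycleType, hσ.cycleType, Equiv.Perm.support_pow_coprime h.symm]
  | induction_disjoint σ τ hd _ hσ hτ =>
    rw [hd.orderOf] at h
    rw [hd.commute.mul_pow, (hd.pow_disjoint_pow m m).cycleType_mul, hd.cycleType_mul,
      hσ (h.coprime_dvd_left (Nat.dvd_lcm_left _ _)),
      hτ (h.coprime_dvd_left (Nat.dvd_lcm_right _ _))]

theorem isConj_pow_of_coprime {α : Type*} [Finite α] (σ : Equiv.Perm α)
    {m : ℕ} (h : (orderOf σ).Coprime m) : IsConj σ (σ ^ m) := by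
  classical
  have := Fintype.ofFinite α
  exact Equiv.Perm.isConj_iff_cycleType_eq.2 (cycleType_pow_of_coprime σ h).symm

theorem exists_disjoint_odd_mul_eq {α : Type*} [Fintype α] [DecidableEq α] {σ : Equiv.Perm α}
    (hord : Even (orderOf σ)) (hsign : σ.sign = 1) :
    ∃ c τ : Equiv.Perm α, c * τ = σ ∧ c.Disjoint τ ∧ c.sign = -1 ∧ τ.sign = -1 := by
  obtain ⟨r, hr, hr2⟩ : ∃ r ∈ σ.cycleType, 2 ∣ r := by
    refine Nat.prime_two.prime.exists_mem_multiset_dvd (hord.two_dvd.trans ?_)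
    rw [← Equiv.Perm.lcm_cycleType]
    exact Multiset.lcm_dvd.2 fun r hr => Multiset.dvd_prod hr
  obtain ⟨c, τ, rfl, hd, hc, rfl⟩ := Equiv.Perm.mem_cycleType_iff.1 hr
  have hcs : c.sign = -1 := by rw [hc.sign, (even_iff_two_dvd.2 hr2).neg_one_pow]
  refine ⟨c, τ, rfl, hd, hcs, ?_⟩
  rwa [Equiv.Perm.sign_mul, hcs, neg_one_mul, neg_eq_iff_eq_neg] at hsign

theorem exists_conj_eq_of_disjoint_isSwap {α : Type*} [DecidableEq α]
    {σ τ σ' τ' : Equiv.Perm α} (hσ : σ.IsSwap) (hτ : τ.IsSwap) (hστ : σ.Disjoint τ)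
    (hσ' : σ'.IsSwap) (hτ' : τ'.IsSwap) (hστ' : σ'.Disjoint τ') :
    ∃ g : Equiv.Perm α, g * σ * g⁻¹ = σ' ∧ g * τ * g⁻¹ = τ' := by
  have nodup {i j k l : α} (hij : i ≠ j) (hkl : k ≠ l)
      (h : (Equiv.swap i j).Disjoint (Equiv.swap k l)) : [i, j, k, l].Nodup := by
    have hi := h i
    have hj := h j
    grind
  obtain ⟨i, j, hij, rfl⟩ := hσ
  obtain ⟨k, l, hkl, rfl⟩ := hτ
  obtain ⟨i', j', hij', rfl⟩ := hσ'
  obtain ⟨k', l', hkl', rfl⟩ := hτ'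
  let u : Fin 4 ↪ α := ⟨[i, j, k, l].get, List.nodup_iff_injective_get.1 (nodup hij hkl hστ)⟩
  let v : Fin 4 ↪ α :=
    ⟨[i', j', k', l'].get, List.nodup_iff_injective_get.1 (nodup hij' hkl' hστ')⟩
  have := Equiv.Perm.isMultiplyPretransitive α 4
  obtain ⟨g, hg⟩ := MulAction.exists_smul_eq (Equiv.Perm α) u v
  have hi : g i = i' := DFunLike.congr_fun hg 0
  have hj : g j = j' := DFunLike.congr_fun hg 1
  have hk : g k = k' := DFunLike.congr_fun hg 2
  have hl : g l = l' := DFunLike.congr_fun hg 3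
  exact ⟨g, by rw [← Equiv.swap_apply_apply, hi, hj], by rw [← Equiv.swap_apply_apply, hk, hl]⟩

end Permutations

section DoubleCovers

theorem pow_eq_self_of_mul_self_of_coprime {M : Type*} [Monoid M] {u : M} {m : ℕ}
    (hu : u * u = 1) (hm : (orderOf u).Coprime m) : u ^ m = u := by
  obtain h | h := (Nat.dvd_prime Nat.prime_two).1
    (orderOf_dvd_of_pow_eq_one ((pow_two u).trans hu))
  · rw [orderOf_eq_one_iff.1 h, one_pow]
  · obtain ⟨r, rfl⟩ := Nat.coprime_two_left.1 (h ▸ hm)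
    rw [pow_succ, pow_mul, pow_two, hu, one_pow, one_mul]

/-- `f : S →* P` is a double cover of `P`: it is surjective and its kernel consists of `1` and a
second element `z`.  The element `z` is then central of order two. -/
structure IsDoubleCover {S P : Type*} [Group S] [Group P] (f : S →* P) (z : S) : Prop where
  surjective : Function.Surjective f
  ne_one : z ≠ 1
  map_eq_one_iff : ∀ x, f x = 1 ↔ x = 1 ∨ x = z

namespace IsDoubleCover

variable {S P : Type*} [Group S] [Group P]

section

variable {f : S →* P} {z : S} (hf : IsDoubleCover f z)
include hf

theorem map_self : f z = 1 := (hf.map_eq_one_iff z).2 (Or.inr rfl)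

theorem mul_self : z * z = 1 :=
  ((hf.map_eq_one_iff (z * z)).1 (by rw [map_mul, hf.map_self, one_mul])).resolve_right
    fun h => hf.ne_one (mul_eq_left.1 h)

theorem commute (x : S) : Commute z x := by
  have hmap : f (x * z * x⁻¹) = 1 := by
    rw [map_mul, map_mul, hf.map_self, mul_one, ← map_mul, mul_inv_cancel, map_one]
  have hconj : x * z * x⁻¹ = z := ((hf.map_eq_one_iff _).1 hmap).resolve_left
    fun h => hf.ne_one (conj_eq_one_iff.1 h)
  exact (mul_inv_eq_iff_eq_mul.1 hconj).symm

theorem pow_of_even {m : ℕ} (hm : Even m) : z ^ m = 1 := by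
  obtain ⟨r, rfl⟩ := hm.two_dvd
  rw [pow_mul, pow_two, hf.mul_self, one_pow]

theorem pow_of_odd {m : ℕ} (hm : Odd m) : z ^ m = z := by
  obtain ⟨r, rfl⟩ := hm
  rw [pow_succ, hf.pow_of_even (even_two_mul r), one_mul]

theorem eq_or_eq_mul {x y : S} (h : f x = f y) : x = y ∨ x = z * y :=
  ((hf.map_eq_one_iff (x * y⁻¹)).1 (by rw [map_mul, map_inv, h, mul_inv_cancel])).imp
    mul_inv_eq_one.1 mul_inv_eq_iff_eq_mul.1

theorem mul_eq_mul_of_not_commute {x y : S} (hxy : Commute (f x) (f y)) (h : ¬ Commute x y) :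
    x * y = z * (y * x) :=
  (hf.eq_or_eq_mul (by rw [map_mul, map_mul, hxy.eq])).resolve_left h

theorem commute_of_map_eq {x x' y y' : S} (hx : f x = f x') (hy : f y = f y')
    (h : Commute x y) : Commute x' y' := by
  have hx' : Commute x' y := by
    obtain rfl | rfl := hf.eq_or_eq_mul hx.symm
    · exact h
    · exact (hf.commute y).mul_left h
  obtain rfl | rfl := hf.eq_or_eq_mul hy.symm
  · exact hx'
  · exact (hf.commute x').symm.mul_right hx'

theorem commute_mul_iff_not_commute {x t y : S} (hxt : Commute (f x) (f t))
    (hxy : Commute (f x) (f y)) (h : ¬ Commute x t) : Commute x (t * y) ↔ ¬ Commute x y := by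
  have hprod : x * (t * y) = z * (t * (x * y)) := by
    rw [← mul_assoc, hf.mul_eq_mul_of_not_commute hxt h]
    simp only [mul_assoc]
  constructor
  · intro hty hy
    rw [hy.eq, ← mul_assoc t, hty.eq] at hprod
    exact hf.ne_one (right_eq_mul.1 hprod)
  · intro hy
    calc x * (t * y) = z * (t * (z * (y * x))) := by
          rw [hprod, hf.mul_eq_mul_of_not_commute hxy hy]
      _ = z * z * (t * y * x) := by
          rw [← mul_assoc t z, ← (hf.commute t).eq]
          simp only [mul_assoc]
      _ = t * y * x := by rw [hf.mul_self, one_mul]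

theorem conj_eq_pow_of_odd_orderOf {x w : S} {m : ℕ} (hodd : Odd (orderOf (f x)))
    (hm : (orderOf x).Coprime m) (hw : f (w * x * w⁻¹) = f (x ^ m)) : w * x * w⁻¹ = x ^ m := by
  refine (hf.eq_or_eq_mul hw).resolve_right fun h => hf.ne_one ?_
  let u := x ^ orderOf (f x)
  have hu : u = 1 ∨ u = z :=
    (hf.map_eq_one_iff _).1 (by rw [map_pow, pow_orderOf_eq_one])
  have hu_pow : u ^ m = u := by
    refine pow_eq_self_of_mul_self_of_coprime ?_ (hm.coprime_dvd_left (orderOf_pow_dvd _))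
    obtain hu | hu := hu
    · rw [hu, mul_one]
    · rw [hu, hf.mul_self]
  have hu_conj : w * u * w⁻¹ = u := by
    obtain hu | hu := hu
    · rw [hu, mul_one, mul_inv_cancel]
    · rw [hu, ← (hf.commute w).eq, mul_inv_cancel_right]
  have : u = z * u := by
    calc u = (w * x * w⁻¹) ^ orderOf (f x) := by rw [conj_pow, hu_conj]
      _ = z * (x ^ m) ^ orderOf (f x) := by
        rw [h, (hf.commute _).mul_pow, hf.pow_of_odd hodd]
      _ = z * u := by rw [← pow_mul, mul_comm m, pow_mul, hu_pow]
  exact right_eq_mul.1 this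

theorem exists_conj_eq_pow_of_section {s : P →* S} (hs : ∀ p, f (s p) = p) {m : ℕ} (hm : Odd m)
    {x : S} (hx : IsConj (f x) (f x ^ m)) : ∃ w, w * x * w⁻¹ = x ^ m := by
  obtain ⟨p, hp⟩ := isConj_iff.1 hx
  have key : s p * s (f x) * (s p)⁻¹ = s (f x) ^ m := by
    rw [← map_inv, ← map_mul, ← map_mul, hp, map_pow]
  refine ⟨s p, ?_⟩
  obtain h | h := hf.eq_or_eq_mul (hs (f x)).symm
  · rwa [← h] at key
  · rw [h, (hf.commute _).mul_pow, hf.pow_of_odd hm, ← key, ← mul_assoc (s p), ← (hf.commute _).eq]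
    simp only [mul_assoc]

theorem exists_conj_eq_pow_of_not_commute {x g : S} (hg : Commute (f g) (f (g⁻¹ * x)))
    (h : ¬ Commute g (g⁻¹ * x)) {m : ℕ} (hx : IsConj (f x) (f x ^ m)) :
    ∃ w, w * x * w⁻¹ = x ^ m := by
  obtain ⟨p, hp⟩ := isConj_iff.1 hx
  obtain ⟨w, rfl⟩ := hf.surjective p
  have hconj : g * x * g⁻¹ = z * x := by
    have := hf.mul_eq_mul_of_not_commute hg h
    rw [mul_inv_cancel_left] at this
    calc g * x * g⁻¹ = g * (z * (g⁻¹ * x * g)) * g⁻¹ := by rw [← this]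
      _ = z * x := by
        rw [← mul_assoc g z, ← (hf.commute g).eq]
        group
  obtain hw | hw := hf.eq_or_eq_mul (x := w * x * w⁻¹) (y := x ^ m) (by simpa using hp)
  · exact ⟨w, hw⟩
  · refine ⟨w * g, ?_⟩
    calc w * g * x * (w * g)⁻¹ = w * (g * x * g⁻¹) * w⁻¹ := by group
      _ = z * (w * x * w⁻¹) := by
        rw [hconj, ← mul_assoc w, ← (hf.commute w).eq]
        group
      _ = x ^ m := by rw [hw, ← mul_assoc, hf.mul_self, one_mul]

end

section Permutations

variable {α : Type*} [Fintype α] [DecidableEq α] {f : S →* Equiv.Perm α} {z : S}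
  (hf : IsDoubleCover f z)
include hf

theorem commute_iff_sign_eq_one_of_disjoint {x : S}
    (hx : ∀ t, (f t).IsSwap → (f x).Disjoint (f t) → ¬ Commute x t) {y : S}
    (hxy : (f x).Disjoint (f y)) : Commute x y ↔ (f y).sign = 1 := by
  have hlift (p : Equiv.Perm {a // f x a = a}) :
      ∀ y, f y = p.ofSubtype → (Commute x y ↔ p.sign = 1) := by
    have hdisj (p : Equiv.Perm {a // f x a = a}) : (f x).Disjoint p.ofSubtype := fun a =>
      (em (f x a = a)).imp_right fun ha => p.ofSubtype_apply_of_not_mem ha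
    induction p using Equiv.Perm.swap_induction_on with
    | one =>
      intro y hy
      rw [map_one] at hy
      rw [Equiv.Perm.sign_one, eq_self, iff_true]
      exact hf.commute_of_map_eq rfl (hy.trans (map_one f).symm).symm (Commute.one_right x)
    | swap_mul p a b hab ih =>
      intro y hy
      obtain ⟨t, ht⟩ := hf.surjective (Equiv.Perm.ofSubtype (Equiv.swap a b))
      have hswap : (f t).IsSwap :=
        ⟨a, b, Subtype.coe_injective.ne hab, by rw [ht, Equiv.Perm.ofSubtype_swap_eq]⟩
      have hty : f (t⁻¹ * y) = p.ofSubtype := by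
        rw [map_mul, map_inv, ht, hy, map_mul, inv_mul_cancel_left]
      have hxt : (f x).Disjoint (f t) := ht ▸ hdisj _
      have := hf.commute_mul_iff_not_commute hxt.commute (hty ▸ hdisj p).commute
        (hx t hswap hxt)
      rw [mul_inv_cancel_left, ih _ hty] at this
      rw [this, Equiv.Perm.sign_mul, Equiv.Perm.sign_swap hab]
      obtain h | h := Int.units_eq_one_or p.sign <;> simp [h]
  have hmaps (a : α) : f x (f y a) = f y a ↔ f x a = a := by
    rw [← Equiv.Perm.mul_apply, hxy.commute.eq, Equiv.Perm.mul_apply, (f y).injective.eq_iff]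
  have hy : Equiv.Perm.ofSubtype ((f y).subtypePerm hmaps) = f y :=
    Equiv.Perm.ofSubtype_subtypePerm _ fun a ha => (hxy a).resolve_right ha
  rw [hlift _ y hy.symm, ← Equiv.Perm.sign_ofSubtype, hy]

theorem not_commute_of_disjoint {t u : S} (ht : (f t).IsSwap) (hu : (f u).IsSwap)
    (htu : (f t).Disjoint (f u)) (h : ¬ Commute t u) {x y : S} (hxy : (f x).Disjoint (f y))
    (hx : (f x).sign = -1) (hy : (f y).sign = -1) : ¬ Commute x y := by
  have hswap (t' u' : S) (ht' : (f t').IsSwap) (hu' : (f u').IsSwap)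
      (htu' : (f t').Disjoint (f u')) : ¬ Commute t' u' := by
    obtain ⟨p, hpt, hpu⟩ := exists_conj_eq_of_disjoint_isSwap ht hu htu ht' hu' htu'
    obtain ⟨w, rfl⟩ := hf.surjective p
    intro hcomm
    have := hf.commute_of_map_eq (x' := w * t * w⁻¹) (y' := w * u * w⁻¹) (by simpa using hpt.symm)
      (by simpa using hpu.symm) hcomm
    exact h ((SemiconjBy.conj_iff).1 this)
  rw [hf.commute_iff_sign_eq_one_of_disjoint ?_ hxy, hy]
  · decide
  · intro t' ht' hxt'
    rw [Commute.symm_iff, hf.commute_iff_sign_eq_one_of_disjoint ?_ hxt'.symm, hx]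
    · decide
    · exact fun u' hu' => hswap t' u' ht' hu'

end Permutations

end IsDoubleCover
end DoubleCovers

section SymmetricDoubleCovers

namespace IsDoubleCover

variable {S : Type*} [Group S] {N : ℕ} {f : S →* Equiv.Perm (Fin (N + 1))} {z : S}
  (hf : IsDoubleCover f z) {T : Fin N → S} (hT : ∀ i, f (T i) = (permCoxeterSystem N).simple i)
  (hsq : ∀ i, T i * T i = 1)
include hf hT hsq

theorem exists_section_of_commute (hcomm : ∀ i j : Fin N, (i : ℕ) + 2 ≤ j → Commute (T i) (T j)) :
    ∃ s : Equiv.Perm (Fin (N + 1)) →* S, ∀ p, f (s p) = p := by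
  have hbraid (i : ℕ) : ∃ e : ℕ, ∀ hi : i + 1 < N,
      (T ⟨i, by lia⟩ * T ⟨i + 1, hi⟩) ^ 3 = z ^ e := by
    by_cases hi : i + 1 < N
    · have h := (isLiftable_A_iff.1 (permCoxeterSystem N).simple_mul_simple_pow).2.1
        ⟨i, by lia⟩ ⟨i + 1, hi⟩ rfl
      rw [← hT, ← hT, ← map_mul, ← map_pow, hf.map_eq_one_iff] at h
      obtain h | h := h
      · exact ⟨0, fun _ => by rw [h, pow_zero]⟩
      · exact ⟨1, fun _ => by rw [h, pow_one]⟩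
    · exact ⟨0, fun h => absurd h hi⟩
  choose e he using hbraid
  -- Replacing `T i` by `z * T i` changes the sign of the braid relations involving `T i`, so the
  -- signs can be corrected one index after the other.
  let c (i : ℕ) : ℕ := ∑ k ∈ Finset.range i, e k
  have hpow (i j : Fin N) (m : ℕ) : (z ^ c i * T i * (z ^ c j * T j)) ^ m =
      z ^ ((c i + c j) * m) * (T i * T j) ^ m := by
    rw [((hf.commute (T i)).symm.pow_right (c j)).mul_mul_mul_comm, ← pow_add,
      ((hf.commute _).pow_left _).mul_pow, pow_mul]
  have hlift : (CoxeterMatrix.A N).IsLiftable fun i => z ^ c i * T i := by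
    refine isLiftable_A_iff.2 ⟨fun i => ?_, fun i j hij => ?_, fun i j hij => ?_⟩
    · have := hpow i i 1
      rwa [hsq, one_pow, mul_one, pow_one, mul_one, hf.pow_of_even (Even.add_self (c i))] at this
    · obtain ⟨j, hj⟩ := j
      subst hij
      rw [hpow, he i hj, ← pow_add]
      refine hf.pow_of_even ?_
      have hc : c (i + 1) = c i + e i := Finset.sum_range_succ _ _
      grind
    · rw [hpow, (hcomm i j hij).mul_pow, pow_two (T i), pow_two (T j), hsq, hsq, mul_one, mul_one]
      exact hf.pow_of_even (even_two.mul_left _)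
  refine ⟨(permCoxeterSystem N).lift ⟨_, hlift⟩, DFunLike.congr_fun (f := f.comp _)
    (g := MonoidHom.id _) ((permCoxeterSystem N).ext_simple fun i => ?_)⟩
  rw [MonoidHom.comp_apply, CoxeterSystem.lift_apply_simple, map_mul, map_pow, hf.map_self,
    one_pow, one_mul, hT, MonoidHom.id_apply]

theorem exists_conj_eq_pow {x : S} (hx : (f x).sign = 1) {m : ℕ} (hm : (orderOf x).Coprime m) :
    ∃ w, w * x * w⁻¹ = x ^ m := by
  have hconj : IsConj (f x) (f x ^ m) :=
    isConj_pow_of_coprime _ (hm.coprime_dvd_left (orderOf_map_dvd f x))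
  obtain heven | hodd := Nat.even_or_odd (orderOf (f x))
  · by_cases hcomm : ∀ i j : Fin N, (i : ℕ) + 2 ≤ j → Commute (T i) (T j)
    · obtain ⟨s, hs⟩ := hf.exists_section_of_commute hT hsq hcomm
      have hm2 : Odd m := Nat.coprime_two_left.1
        (hm.coprime_dvd_left (heven.two_dvd.trans (orderOf_map_dvd f x)))
      exact hf.exists_conj_eq_pow_of_section hs hm2 hconj
    · push Not at hcomm
      obtain ⟨i, j, hij, hne⟩ := hcomm
      obtain ⟨c, τ, hcτ, hd, hc, hτ⟩ := exists_disjoint_odd_mul_eq heven hx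
      obtain ⟨g, rfl⟩ := hf.surjective c
      have hg : f (g⁻¹ * x) = τ := by rw [map_mul, map_inv, ← hcτ, inv_mul_cancel_left]
      have hswap (i : Fin N) : (f (T i)).IsSwap :=
        ⟨i.castSucc, i.succ, Fin.castSucc_lt_succ.ne,
          (hT i).trans (permCoxeterSystem_simple i)⟩
      have hdisj : (f (T i)).Disjoint (f (T j)) := by
        rw [hT, hT, permCoxeterSystem_simple, permCoxeterSystem_simple]
        exact Equiv.Perm.disjoint_swap_swap (nodup_castSucc_succ hij)
      exact hf.exists_conj_eq_pow_of_not_commute (hg ▸ hd.commute)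
        (hf.not_commute_of_disjoint (hswap i) (hswap j) hdisj hne (hg ▸ hd) hc (hg ▸ hτ)) hconj
  · obtain ⟨p, hp⟩ := isConj_iff.1 hconj
    obtain ⟨w, rfl⟩ := hf.surjective p
    exact ⟨w, hf.conj_eq_pow_of_odd_orderOf hodd hm (by simpa using hp)⟩

end IsDoubleCover
end SymmetricDoubleCovers

section Extension

theorem exists_isDoubleCover_of_mul_self {S : Type u} [Group S] {c : S} (hc : c ≠ 1)
    (hsq : c * c = 1) (hcomm : ∀ x, Commute c x) :
    ∃ (Q : Type u) (_ : Group Q) (π : S →* Q), IsDoubleCover π c := by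
  have hpow (m : ℤ) : c ^ m = 1 ∨ c ^ m = c := by
    obtain ⟨r, rfl⟩ | ⟨r, rfl⟩ := m.even_or_odd
    · exact Or.inl (by rw [← two_mul, zpow_mul, zpow_two, hsq, one_zpow])
    · exact Or.inr (by rw [zpow_add_one, zpow_mul, zpow_two, hsq, one_zpow, one_mul])
  have : (Subgroup.zpowers c).Normal := by
    refine ⟨?_⟩
    rintro _ ⟨m, rfl⟩ x
    exact ⟨m, by rw [← ((hcomm x).zpow_left m).eq, mul_inv_cancel_right]⟩
  refine ⟨S ⧸ Subgroup.zpowers c, inferInstance, QuotientGroup.mk' _,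
    QuotientGroup.mk'_surjective _, hc, fun x => ?_⟩
  rw [QuotientGroup.mk'_apply, QuotientGroup.eq_one_iff]
  constructor
  · rintro ⟨m, rfl⟩
    exact hpow m
  · rintro (rfl | rfl)
    · exact one_mem _
    · exact Subgroup.mem_zpowers x

namespace IsDoubleCover

variable {S P : Type*} [Group S] [Group P] {f : S →* P} {z : S}

theorem subgroupComap (hf : IsDoubleCover f z) (H : Subgroup P) :
    IsDoubleCover (f.subgroupComap H) ⟨z, by rw [Subgroup.mem_comap, hf.map_self]; exact one_mem H⟩
    where
  surjective := f.subgroupComap_surjective_of_surjective H hf.surjective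
  ne_one h := hf.ne_one (congrArg Subtype.val h)
  map_eq_one_iff x := by
    simp only [Subtype.ext_iff]
    exact hf.map_eq_one_iff x

theorem snd_eqLocus (hf : IsDoubleCover f z) {R : Type*} [Group R] (s : R →* P) :
    IsDoubleCover ((MonoidHom.snd S R).comp
      ((f.comp (MonoidHom.fst S R)).eqLocus (s.comp (MonoidHom.snd S R))).subtype)
      ⟨(z, 1), hf.map_self.trans s.map_one.symm⟩ where
  surjective p := by
    obtain ⟨x, hx⟩ := hf.surjective (s p)
    exact ⟨⟨(x, p), hx⟩, rfl⟩
  ne_one h := hf.ne_one (congrArg (fun x => x.1.1) h)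
  map_eq_one_iff := by
    rintro ⟨⟨x, p⟩, hx : f x = s p⟩
    change p = 1 ↔ _
    simp only [Subtype.ext_iff, Prod.ext_iff, Subgroup.coe_one, Prod.fst_one, Prod.snd_one,
      ← or_and_right, iff_and_self]
    rintro rfl
    exact (hf.map_eq_one_iff x).1 (hx.trans s.map_one)

theorem bijective_of_map_eq (hf : IsDoubleCover f z) {S' : Type*} [Group S'] {f' : S' →* P}
    {z' : S'} (hf' : IsDoubleCover f' z') {φ : S' →* S} (hφ : ∀ x, f (φ x) = f' x)
    (hz : φ z' = z) : Function.Bijective φ := by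
  refine ⟨(injective_iff_map_eq_one φ).2 fun x hx => ?_, fun y => ?_⟩
  · refine ((hf'.map_eq_one_iff x).1 (by rw [← hφ, hx, map_one])).resolve_right ?_
    rintro rfl
    exact hf.ne_one (hz ▸ hx)
  · obtain ⟨x, hx⟩ := hf'.surjective (f y)
    obtain rfl | rfl := hf.eq_or_eq_mul (hx.symm.trans (hφ x).symm)
    · exact ⟨x, rfl⟩
    · exact ⟨z' * x, by rw [map_mul, hz]⟩

end IsDoubleCover

section WreathProducts

open RegularWreathProduct

variable {D P Q : Type*} [Group D] [Group P] [Group Q]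

/-- The homomorphism of regular wreath products induced by a homomorphism of base groups. -/
def wreathMap (Q : Type*) [Group Q] (h : D →* P) : D ≀ᵣ Q →* P ≀ᵣ Q where
  toFun x := ⟨h ∘ x.left, x.right⟩
  map_one' := by ext <;> simp
  map_mul' x y := by ext <;> simp

/-- The diagonal element of the base group of a regular wreath product. -/
def wreathDiagonal (Q : Type*) [Group Q] (d : D) : D ≀ᵣ Q := ⟨fun _ => d, 1⟩

/-- The Kaluzhnin–Krasner embedding of a group `P` with quotient `χ : P →* Q` into `P ≀ᵣ Q`,
given by coset representatives `σ`. -/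
def kaluzhninKrasner (χ : P →* Q) (σ : Q → P) : P →* P ≀ᵣ Q where
  toFun p := ⟨fun q => σ q * p * (σ ((χ p)⁻¹ * q))⁻¹, χ p⟩
  map_one' := by ext <;> simp
  map_mul' p p' := by ext <;> simp [mul_assoc]

/-- The coset representatives `1` and `t` for a character of order two, used as the transversal of
a Kaluzhnin–Krasner embedding. -/
def signTransversal (t : P) (ε : ℤˣ) : P := if ε = 1 then 1 else t

/-- The element of `D ≀ᵣ ℤˣ` with components `q` and `q⁻¹` that swaps the two factors; it is an
involution whatever the order of `q`. -/
def wreathInvolution (q : D) : D ≀ᵣ ℤˣ := ⟨fun ε => q ^ (ε : ℤ), -1⟩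

theorem wreathInvolution_mul_self (q : D) : wreathInvolution q * wreathInvolution q = 1 := by
  ext <;> simp [wreathInvolution]

theorem wreathInvolution_mul_pow {q r d : D} {m : ℕ} (h : (q * r⁻¹) ^ m = d) (hdd : d * d = 1)
    (hd : Commute d q) : (wreathInvolution q * wreathInvolution r) ^ m = wreathDiagonal ℤˣ d := by
  have hpow (m : ℕ) : (wreathInvolution q * wreathInvolution r) ^ m =
      ⟨fun ε => (q ^ (ε : ℤ) * r ^ (-ε : ℤ)) ^ m, 1⟩ := by
    induction m with
    | zero => ext <;> simp
    | succ m ih => rw [pow_succ, ih]; ext <;> simp [wreathInvolution, pow_succ]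
  have hinv : (q⁻¹ * r) ^ m = d := by
    calc (q⁻¹ * r) ^ m = q⁻¹ * ((q * r⁻¹) ^ m)⁻¹ * q⁻¹⁻¹ := by
          rw [← inv_pow, ← conj_pow]
          group
      _ = d := by
        rw [h, inv_eq_of_mul_eq_one_left hdd, mul_assoc, inv_inv, hd.eq, inv_mul_cancel_left]
  rw [hpow, wreathDiagonal]
  congr 1
  funext ε
  obtain rfl | rfl := Int.units_eq_one_or ε
  · simpa using h
  · simpa using hinv

theorem wreathMap_wreathInvolution {h : D →* P} {q : D} {r t : P} {χ : P →* ℤˣ}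
    (hq : h q = r * t) (hr : r * r = 1) (ht : t * t = 1) (hχ : χ r = -1) :
    wreathMap ℤˣ h (wreathInvolution q) = kaluzhninKrasner χ (signTransversal t) r := by
  ext ε
  · obtain rfl | rfl := Int.units_eq_one_or ε
    · simp [wreathMap, wreathInvolution, kaluzhninKrasner, signTransversal, hq, hχ,
        inv_eq_of_mul_eq_one_left ht]
    · simp [wreathMap, wreathInvolution, kaluzhninKrasner, signTransversal, hq, hχ,
        inv_eq_of_mul_eq_one_left ht, inv_eq_of_mul_eq_one_left hr]
  · simp [wreathMap, wreathInvolution, kaluzhninKrasner, hχ]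

theorem IsDoubleCover.exists_isDoubleCover_wreathDiagonal {G : Type u} [Group G] {f : G →* P}
    {z : G} (hf : IsDoubleCover f z) :
    ∃ (Q : Type u) (_ : Group Q) (π : G ≀ᵣ ℤˣ →* Q), IsDoubleCover π (wreathDiagonal ℤˣ z) := by
  refine exists_isDoubleCover_of_mul_self (fun h => hf.ne_one ?_) ?_ fun x => ?_
  · exact congrFun (congrArg RegularWreathProduct.left h) 1
  · ext <;> simp [wreathDiagonal, hf.mul_self]
  · ext <;> simp [wreathDiagonal, (hf.commute _).eq]

end WreathProducts

section CoxeterSystems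

open RegularWreathProduct

variable {B : Type*} {M : CoxeterMatrix B} {W : Type v} [Group W] (cs : CoxeterSystem M W)
  {χ : W →* ℤˣ} {G : Type u} [Group G] {f : G →* χ.ker} {z : G}

theorem IsDoubleCover.isLiftable_wreathInvolution (hf : IsDoubleCover f z) {q : B → G} {t : W}
    (hq : ∀ i, (f (q i) : W) = cs.simple i * t) {Q : Type*} [Group Q] {π : G ≀ᵣ ℤˣ →* Q}
    (hπ : IsDoubleCover π (wreathDiagonal ℤˣ z)) :
    M.IsLiftable fun i => π (wreathInvolution (q i)) := by
  intro i j
  have hmap : f ((q i * (q j)⁻¹) ^ M i j) = 1 := by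
    ext
    rw [map_pow, map_mul, map_inv, Subgroup.coe_pow, Subgroup.coe_mul, Subgroup.coe_inv, hq, hq,
      mul_inv_rev, mul_assoc, mul_inv_cancel_left, cs.inv_simple, cs.simple_mul_simple_pow,
      Subgroup.coe_one]
  rw [← map_mul, ← map_pow, hπ.map_eq_one_iff]
  exact ((hf.map_eq_one_iff _).1 hmap).imp
    (fun h => wreathInvolution_mul_pow h (one_mul 1) (Commute.one_left _))
    (fun h => wreathInvolution_mul_pow h hf.mul_self (hf.commute _))

theorem IsDoubleCover.wreathMap_eq_kaluzhninKrasner (hχ : ∀ i, χ (cs.simple i) = -1)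
    (hf : IsDoubleCover f z) {q : B → G} {t : W} (ht : t * t = 1)
    (hq : ∀ i, (f (q i) : W) = cs.simple i * t) {Q : Type*} [Group Q] {π : G ≀ᵣ ℤˣ →* Q}
    (hπ : IsDoubleCover π (wreathDiagonal ℤˣ z)) {s : W →* Q}
    (hs : ∀ i, s (cs.simple i) = π (wreathInvolution (q i))) {x : G ≀ᵣ ℤˣ} {w : W}
    (h : π x = s w) :
    wreathMap ℤˣ (χ.ker.subtype.comp f) x = kaluzhninKrasner χ (signTransversal t) w := by
  let F : G ≀ᵣ ℤˣ →* W ≀ᵣ ℤˣ := wreathMap ℤˣ (χ.ker.subtype.comp f)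
  have hker : π.ker ≤ F.ker := by
    intro x hx
    obtain rfl | rfl := (hπ.map_eq_one_iff x).1 hx
    · exact one_mem _
    · ext <;> simp [F, wreathMap, wreathDiagonal, hf.map_self]
  let F' : Q →* W ≀ᵣ ℤˣ := π.liftOfSurjective hπ.surjective ⟨F, hker⟩
  have hF' (x : G ≀ᵣ ℤˣ) : F' (π x) = F x := π.liftOfRightInverse_comp_apply _ _ ⟨F, hker⟩ x
  have hι : F'.comp s = kaluzhninKrasner χ (signTransversal t) := cs.ext_simple fun i => by
    rw [MonoidHom.comp_apply, hs, hF']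
    exact wreathMap_wreathInvolution (hq i) (cs.simple_mul_simple_self i) ht (hχ i)
  rw [← hι, MonoidHom.comp_apply, ← h, hF']

theorem IsDoubleCover.exists_extension [Nonempty B] (hχ : ∀ i, χ (cs.simple i) = -1)
    (hf : IsDoubleCover f z) : ∃ (K : Type (max u v)) (_ : Group K) (p : K →* W) (z' : K),
      IsDoubleCover p z' ∧ (∃ T : B → K, ∀ i, p (T i) = cs.simple i ∧ T i * T i = 1) ∧
      Nonempty (χ.ker.comap p ≃* G) := by
  obtain ⟨i₀⟩ := ‹Nonempty B›
  have hq (i : B) : ∃ q, (f q : W) = cs.simple i * cs.simple i₀ := by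
    have hker : cs.simple i * cs.simple i₀ ∈ χ.ker := by
      rw [MonoidHom.mem_ker, map_mul, hχ, hχ, neg_mul_neg, one_mul]
    obtain ⟨q, hq⟩ := hf.surjective ⟨_, hker⟩
    exact ⟨q, congrArg Subtype.val hq⟩
  choose q hq using hq
  obtain ⟨Q, _, π, hπ⟩ := hf.exists_isDoubleCover_wreathDiagonal
  let s : W →* Q := cs.lift ⟨_, hf.isLiftable_wreathInvolution cs hq hπ⟩
  have hs (i : B) : s (cs.simple i) = π (wreathInvolution (q i)) := cs.lift_apply_simple _ i
  let K := (π.comp (MonoidHom.fst (G ≀ᵣ ℤˣ) W)).eqLocus (s.comp (MonoidHom.snd (G ≀ᵣ ℤˣ) W))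
  let p : K →* W := (MonoidHom.snd _ _).comp K.subtype
  have hp : IsDoubleCover p _ := hπ.snd_eqLocus s
  have heq (x : K) := hf.wreathMap_eq_kaluzhninKrasner cs hχ (cs.simple_mul_simple_self i₀)
    hq hπ hs x.2
  have hright (x : χ.ker.comap p) : x.1.1.1.right = 1 :=
    (congrArg RegularWreathProduct.right (heq x.1)).trans x.2
  have hleft (x : χ.ker.comap p) : (f (x.1.1.1.left 1) : W) = p x.1 := by
    have hx : χ x.1.1.2 = 1 := x.2
    have h := congrFun (congrArg RegularWreathProduct.left (heq x.1)) 1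
    simpa [p, wreathMap, kaluzhninKrasner, signTransversal, hx] using h
  let φ : χ.ker.comap p →* G := MonoidHom.mk' (fun x => x.1.1.1.left 1) fun x y => by
    simp [hright]
  refine ⟨K, inferInstance, p, _, hp, ⟨fun i => ⟨(wreathInvolution (q i), cs.simple i),
    (hs i).symm⟩, fun i => ⟨rfl, Subtype.ext (Prod.ext (wreathInvolution_mul_self _)
    (cs.simple_mul_simple_self i))⟩⟩, ⟨MulEquiv.ofBijective φ ?_⟩⟩
  exact hf.bijective_of_map_eq (hp.subgroupComap χ.ker) (fun x => Subtype.ext (hleft x)) rfl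

end CoxeterSystems
end Extension

section AlternatingGroups

theorem IsDoubleCover.exists_mulAut_eq_pow {n : ℕ} {G : Type*} [Group G]
    {f : G →* alternatingGroup (Fin n)} {z : G} (hf : IsDoubleCover f z) {g : G} {m : ℕ}
    (hm : (orderOf g).Coprime m) : ∃ φ : MulAut G, φ g = g ^ m := by
  obtain hn | ⟨N, hN, rfl⟩ : n ≤ 1 ∨ ∃ N, N ≠ 0 ∧ n = N + 1 := by
    obtain hn | hn := le_or_gt n 1
    · exact Or.inl hn
    · exact Or.inr ⟨n - 1, by lia, by lia⟩
  · have := Fin.subsingleton_iff_le_one.2 hn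
    have hg : g * g = 1 := by
      obtain rfl | rfl := (hf.map_eq_one_iff g).1 (Subsingleton.elim _ _)
      · exact one_mul 1
      · exact hf.mul_self
    exact ⟨1, (pow_eq_self_of_mul_self_of_coprime hg hm).symm⟩
  · have : NeZero N := ⟨hN⟩
    obtain ⟨K, _, p, c, hp, ⟨T, hT⟩, ⟨e⟩⟩ := hf.exists_extension (permCoxeterSystem N)
      (χ := Equiv.Perm.sign) fun i => by
        rw [permCoxeterSystem_simple, Equiv.Perm.sign_swap Fin.castSucc_lt_succ.ne]
    let x := e.symm g
    have hx : (orderOf (x : K)).Coprime m := by rwa [Subgroup.orderOf_coe, e.symm.orderOf_eq]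
    obtain ⟨w, hw⟩ := hp.exists_conj_eq_pow (fun i => (hT i).1) (fun i => (hT i).2) x.2 hx
    refine ⟨(e.symm.trans (MulAut.conjNormal w)).trans e, ?_⟩
    have hconj : MulAut.conjNormal w x = x ^ m := Subtype.ext hw
    change e (MulAut.conjNormal w x) = g ^ m
    rw [hconj, map_pow, e.apply_symm_apply]

theorem exists_isDoubleCover_of_natCard_eq_two {G P : Type*} [Group G] [Group P] {Z : Subgroup G}
    [Z.Normal] (hZ : Nat.card Z = 2) (e : G ⧸ Z ≃* P) :
    ∃ z, IsDoubleCover (e.toMonoidHom.comp (QuotientGroup.mk' Z)) z := by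
  obtain ⟨z, hz, hz'⟩ := (Nat.card_eq_two_iff' (1 : Z)).1 hZ
  refine ⟨z, e.surjective.comp (QuotientGroup.mk'_surjective Z), by simpa using hz, fun x => ?_⟩
  rw [MonoidHom.comp_apply, MulEquiv.coe_toMonoidHom, e.map_eq_one_iff, QuotientGroup.mk'_apply,
    QuotientGroup.eq_one_iff]
  constructor
  · intro hx
    exact or_iff_not_imp_left.2 fun h => congrArg Subtype.val (hz' ⟨x, hx⟩ (by simpa using h))
  · rintro (rfl | rfl)
    · exact one_mem Z
    · exact z.2

end AlternatingGroups

theorem double_cover_alternatingGroup_block_morita_frobenius_number_one_general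
    (ℓ : ℕ) [Fact ℓ.Prime] (k : Type u) [Field k] [IsAlgClosed k] [CharP k ℓ]
    (n : ℕ) (G : Type v) [Group G] [Finite G]
    (Z : Subgroup G) [Z.Normal] (hZ2 : Nat.card Z = 2) (cover : G ⧸ Z ≃* alternatingGroup (Fin n))
    (b : MonoidAlgebra k G) (hb : IsBlock b) [Fact (IsCentralIdem b)] :
    ∃ E : ModuleCat.{max u v} (Corner b) ≌ ModuleCat.{max u v} (FrobTwist ℓ (Corner b)),
      ∃ _ : E.functor.Additive, E.functor.Linear k := by
  obtain ⟨z, hz⟩ := exists_isDoubleCover_of_natCard_eq_two hZ2 cover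
  exact hb.moritaEquivalent_frobTwist fun g hg =>
    hz.exists_mulAut_eq_pow ((Fact.out : ℓ.Prime).coprime_iff_not_dvd.2 hg).symm

/-- Let `G` be a double cover of the alternating group `A_n`: a finite group with a
central subgroup `Z` of order `2` such that `G/Z ≅ A_n`.  Every block `b` of `kG`,
with `k` an algebraic closure of `𝔽_ℓ`, has Morita Frobenius number `1`: the block
algebra `kG·b` is Morita equivalent, as a `k`-algebra, to its first Frobenius twist;
i.e. there is a `k`-linear equivalence between the module categories of `kG·b` and of
its first Frobenius twist. -/
theorem double_cover_alternatingGroup_block_morita_frobenius_number_one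
    (ℓ : ℕ) [Fact ℓ.Prime] (k : Type) [Field k] [IsAlgClosed k] [CharP k ℓ]
    [Algebra (ZMod ℓ) k] [IsAlgClosure (ZMod ℓ) k]
    (n : ℕ) (G : Type) [Group G] [Fintype G]
    (Z : Subgroup G) [Z.Normal] (hZc : Z ≤ Subgroup.center G) (hZ2 : Nat.card Z = 2)
    (cover : G ⧸ Z ≃* alternatingGroup (Fin n))
    (b : MonoidAlgebra k G) (hb : IsBlock b) [Fact (IsCentralIdem b)] :
    ∃ E : ModuleCat.{0} (Corner b) ≌ ModuleCat.{0} (FrobTwist ℓ (Corner b)),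
      ∃ hadd : E.functor.Additive,
        @Functor.Linear k _ _ _ _ _ _ _ _ _ E.functor :=
  double_cover_alternatingGroup_block_morita_frobenius_number_one_general ℓ k n G Z hZ2 cover b hb
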